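/- Let w = [i_1, …, i_ℓ] be a positive braid word on n strands with coloring γ. If w has no uni-colored crossings (i.e. γ(k−1)(i_k) ≠ γ(k−1)(i_k+1) for every k) and w is color-pure with respect to γ (i.e. γ(ℓ) = γ), then the underlying permutation of w is trivial: Φ(w) = id, i.e. w is a pure braid word. -/

import Mathlib

/-- The underlying permutation of a positive braid word `[i₁, …, i_ℓ]`:
the composite `s_{i_ℓ} ∘ ⋯ ∘ s_{i_1}` of the adjacent transpositions
`s_i = (i, i+1)`. -/
def braidPerm : List ℕ → Equiv.Perm ℕ
  | [] => 1
  | i :: w => braidPerm w * Equiv.swap i (i + 1)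

/-- The coloring induced at the bottom of a positive braid word, starting from the
coloring `γ` at the top: each letter `i` replaces the current coloring `γ'` by
`γ' ∘ s_i`.  A word `w` is color-pure with respect to `γ` when
`colorAfter γ w = γ`. -/
def colorAfter (γ : ℕ → ℕ) : List ℕ → (ℕ → ℕ)
  | [] => γ
  | i :: w => colorAfter (fun p => γ (Equiv.swap i (i + 1) p)) w

/-- A positive braid word with top coloring `γ` has no uni-colored crossings:
at every crossing of the word (read top to bottom), the two colors involved are
different. -/
def NoUnicolored (γ : ℕ → ℕ) : List ℕ → Prop
  | [] => True
  | i :: w => γ i ≠ γ (i + 1) ∧ NoUnicolored (fun p => γ (Equiv.swap i (i + 1) p)) w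

/-!
Two strands of the same color never cross, so the underlying permutation preserves the order of the
strands within each color class. Color-purity says that it also maps each color class onto itself,
and the only order automorphism of a well-ordered set is the identity.
-/

theorem eqOn_of_strictMonoOn_of_image_eq {α β : Type*} [LinearOrder α] [Preorder β]
    {f g : α → β} {s : Set α} [WellFoundedLT s] (hf : StrictMonoOn f s) (hg : StrictMonoOn g s)
    (himage : f '' s = g '' s) : Set.EqOn f g s := by
  rw [← Set.domRestrict_eq_domRestrict_iff]
  refine (StrictMono.range_inj hf.domRestrict hg.domRestrict).mp ?_
  simpa only [Set.range_domRestrict] using himage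

theorem perm_eq_one_of_strictMonoOn_fibers {α κ : Type*} [LinearOrder α] [WellFoundedLT α]
    {σ : Equiv.Perm α} {γ : α → κ} (hγ : ∀ a, γ (σ a) = γ a)
    (hσ : ∀ c, StrictMonoOn σ (γ ⁻¹' {c})) : σ = 1 := by
  ext a
  have himage : σ '' (γ ⁻¹' {γ a}) = id '' (γ ⁻¹' {γ a}) := by
    ext b
    simp [σ.image_eq_preimage_symm, ← hγ (σ.symm b)]
  exact eqOn_of_strictMonoOn_of_image_eq (hσ (γ a)) strictMonoOn_id himage rfl

theorem strictMonoOn_swap_of_covBy {α : Type*} [LinearOrder α] {i j : α} {s : Set α}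
    (hij : i ⋖ j) (hs : i ∈ s → j ∉ s) : StrictMonoOn (Equiv.swap i j) s := by
  intro p hp q hq hpq
  have hi : i < q → j ≤ q := hij.ge_of_gt
  have hj : p < j → p ≤ i := hij.le_of_lt
  have hlt : i < j := hij.lt
  grind

theorem colorAfter_braidPerm (γ : ℕ → ℕ) (w : List ℕ) (p : ℕ) :
    colorAfter γ w (braidPerm w p) = γ p := by
  induction w generalizing γ p with
  | nil => rfl
  | cons i w ih =>
    simp only [colorAfter, braidPerm, Equiv.Perm.mul_apply, ih, Equiv.swap_apply_self]

theorem strictMonoOn_braidPerm_fiber {γ : ℕ → ℕ} {w : List ℕ} (huni : NoUnicolored γ w) (c : ℕ) :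
    StrictMonoOn (braidPerm w) (γ ⁻¹' {c}) := by
  induction w generalizing γ with
  | nil => exact strictMonoOn_id
  | cons i w ih =>
    obtain ⟨hcrossing, hrest⟩ := huni
    have hswap : StrictMonoOn (Equiv.swap i (i + 1)) (γ ⁻¹' {c}) :=
      strictMonoOn_swap_of_covBy (Order.covBy_add_one i) fun hi hj => hcrossing (hi.trans hj.symm)
    refine (ih hrest).comp hswap fun p hp => ?_
    simpa using hp

/-- from the proof of Lemma 3.3.  A positive braid word on `n`
strands with coloring `γ` that has no uni-colored crossings and is color-pure with
respect to `γ` is a pure braid word: its underlying permutation is trivial. -/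
theorem colorPure_noUnicolored_isPure (n : ℕ) (hn : 1 ≤ n) (w : List ℕ)
    (hw : ∀ i ∈ w, 1 ≤ i ∧ i < n) (γ : ℕ → ℕ)
    (huni : NoUnicolored γ w) (hpure : colorAfter γ w = γ) :
    braidPerm w = 1 := by
  have hcolor (p : ℕ) : γ (braidPerm w p) = γ p :=
    calc
      γ (braidPerm w p) = colorAfter γ w (braidPerm w p) := by rw [hpure]
      _ = γ p := colorAfter_braidPerm γ w p
  exact perm_eq_one_of_strictMonoOn_fibers hcolor (strictMonoOn_braidPerm_fiber huni)
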